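/- Let b = (b_1,…,b_n) and suppose a_i b_j ∉ q^{−ℕ} for all 1 ≤ i, j ≤ n, and 0 < |s| < 1. Then the truncated dual Milne–Gustafson sum evaluates as Ī(s;b) = (1−q)ⁿ (q)_∞ⁿ (s a_1⋯a_n b_1⋯b_n)_∞ / [ (s)_∞ · ∏_{i=1}^n ∏_{j=1}^n (a_i b_j)_∞ ] · ∏_{1≤i<j≤n} b_i θ(b_j/b_i). (Corollary 3.8 of the paper, written multiplicatively with s = q^β.) -/

import Mathlib

/-!
At `y = b` only `ν ∈ ℕⁿ` contributes, and the claim is the evaluation of the power series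
`F(s) = ∑_ν s^{|ν|} W(ν) Δ(w)`, where `w_i = b_i q^{ν_i}`, `W(ν)` is the product of the
q-Pochhammer quotients and `Δ(w) = ∏_{i<j} (w_i - w_j)`. As in the q-binomial theorem (`n = 1`), it
is enough to establish the q-difference equation `(1 - s) F(s) = (1 - s ∏ a ∏ b) F(qs)`: iterating
it gives `(s)_∞ F(s) = (s ∏ a ∏ b)_∞ F(0)`, and `F(0) = W(0) Δ(b)` is a product of theta functions.

The equation rests on two facts. First, `Δ(w)` is a Vandermonde determinant, and with the cofactors
`C_i(w)` of its column of ones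
`∑_i ∏_j (1 - β_j w_i) C_i(w) = (1 - ∏ β ∏ w) Δ(w)` for all `β`, where `C_i` does not depend on
`w_i`. For `β = b⁻¹` and `β = a` the factors on the right are `1 - q^{|ν|}` and
`1 - ∏ a ∏ b q^{|ν|}`. Second, the substitution `ν ↦ ν + e_i` exchanges `∏_j (1 - b_j⁻¹ w_i)` and
`∏_j (1 - a_j w_i)`. Neither fact divides by differences of the `w_i`, so coinciding points, i.e.
`b_i / b_j ∈ q^ℤ`, need no separate treatment.
-/

open scoped BigOperators
open Finset

/-- The infinite q-Pochhammer symbol `(a)_∞ = ∏_{i=0}^∞ (1 - qⁱ a)`. -/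
noncomputable def qp (q a : ℂ) : ℂ := ∏' i : ℕ, (1 - q ^ i * a)

/-- The theta function `θ(a) = (a)_∞ (q/a)_∞`. -/
noncomputable def th (q a : ℂ) : ℂ := qp q a * qp q (q / a)

/-- Summand of the normalized dual Jackson integral of Milne–Gustafson type. -/
noncomputable def mgDualTerm {n : ℕ} (q s : ℂ) (a b y : Fin n → ℂ) (ν : Fin n → ℤ) : ℂ :=
  s ^ (∑ i, ν i) *
    (∏ i, ∏ j, qp q (q * (b j)⁻¹ * (y i * q ^ ν i)) / qp q (a j * (y i * q ^ ν i))) *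
    ∏ i, ∏ j ∈ Finset.Ioi i, (y i * q ^ ν i - y j * q ^ ν j)

/-- The normalized dual Jackson integral of Milne–Gustafson type `Ī(s;y)`. -/
noncomputable def mgDualSum {n : ℕ} (q s : ℂ) (a b y : Fin n → ℂ) : ℂ :=
  (1 - q) ^ n * ∑' ν : Fin n → ℤ, mgDualTerm q s a b y ν

open Asymptotics Filter Matrix Polynomial Topology

/-! ### The infinite q-Pochhammer symbol -/

lemma norm_pow_mul_le {𝕜 : Type*} [NormedDivisionRing 𝕜] {q : 𝕜} (hq : ‖q‖ ≤ 1) (k : ℕ) (x : 𝕜) :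
    ‖q ^ k * x‖ ≤ ‖x‖ := by
  rw [norm_mul, norm_pow]
  exact mul_le_of_le_one_left (norm_nonneg x) (pow_le_one₀ (norm_nonneg q) hq)

section QPochhammer

variable {q : ℂ}

lemma summable_norm_neg_pow_mul (hq : ‖q‖ < 1) (a : ℂ) :
    Summable fun i : ℕ => ‖-(q ^ i * a)‖ := by
  simp only [norm_neg, norm_mul, norm_pow]
  exact (summable_geometric_of_lt_one (norm_nonneg q) hq).mul_right _

lemma multipliable_one_sub_pow_mul (hq : ‖q‖ < 1) (a : ℂ) :
    Multipliable fun i : ℕ => 1 - q ^ i * a := by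
  simpa only [sub_eq_add_neg] using
    multipliable_one_add_of_summable (summable_norm_neg_pow_mul hq a)

lemma qp_eq_one_sub_mul (hq : ‖q‖ < 1) (a : ℂ) : qp q a = (1 - a) * qp q (q * a) := by
  have shift (i : ℕ) : 1 - q ^ (i + 1) * a = 1 - q ^ i * (q * a) := by ring
  have hm := multipliable_one_sub_pow_mul hq (q * a)
  simp only [← shift] at hm
  simp only [qp, tprod_eq_zero_mul' (f := fun i : ℕ => 1 - q ^ i * a) hm, shift, pow_zero, one_mul]

lemma qp_ne_zero_of_norm_lt_one (hq : ‖q‖ < 1) {a : ℂ} (ha : ‖a‖ < 1) : qp q a ≠ 0 := by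
  have factor_ne_zero (i : ℕ) : 1 + -(q ^ i * a) ≠ 0 := fun h => by
    have hlt := (norm_pow_mul_le hq.le i a).trans_lt ha
    rw [← sub_eq_zero.mp ((sub_eq_add_neg _ _).trans h), norm_one] at hlt
    exact lt_irrefl _ hlt
  simpa only [qp, sub_eq_add_neg] using
    tprod_one_add_ne_zero_of_summable factor_ne_zero (summable_norm_neg_pow_mul hq a)

lemma qp_zpow_eq_zero (hq0 : q ≠ 0) {k : ℤ} (hk : k ≤ 0) : qp q (q ^ k) = 0 := by
  obtain ⟨l, rfl⟩ := Int.exists_eq_neg_ofNat hk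
  exact tprod_of_exists_eq_zero ⟨l, by simp [hq0]⟩

lemma tendsto_qp_nhds_zero (hq : ‖q‖ < 1) : Tendsto (qp q) (𝓝 0) (𝓝 1) := by
  have h := tendsto_tprod_one_add_of_dominated_convergence (𝓕 := 𝓝 (0 : ℂ))
    (f := fun x (i : ℕ) => -(q ^ i * x)) (g := fun _ => 0) (summable_norm_neg_pow_mul hq 1)
    (fun i => Continuous.tendsto' (by fun_prop) _ _ (by simp)) ?_
  · simpa only [funext fun x => qp.eq_1 q x, sub_eq_add_neg, neg_zero, add_zero, tprod_one] using h
  · filter_upwards [Metric.closedBall_mem_nhds (0 : ℂ) one_pos] with x hx i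
    rw [mem_closedBall_zero_iff] at hx
    simpa only [norm_neg, norm_mul, norm_one] using
      mul_le_mul_of_nonneg_left hx (norm_nonneg (q ^ i))

lemma qp_div_qp_mul_one_sub (hq : ‖q‖ < 1) (u : ℂ) {v : ℂ} (hv : v ≠ 1) :
    qp q (q * u) / qp q (q * v) * (1 - u) = qp q u / qp q v * (1 - v) := by
  have hv' : 1 - v ≠ 0 := sub_ne_zero.mpr hv.symm
  rw [qp_eq_one_sub_mul hq u, qp_eq_one_sub_mul hq v]
  field_simp

lemma mul_th_div (hq : ‖q‖ < 1) {x y : ℂ} (hx : x ≠ 0) (hy : y ≠ 0) :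
    x * th q (y / x) = (x - y) * (qp q (q * x⁻¹ * y) * qp q (q * y⁻¹ * x)) := by
  rw [th, qp_eq_one_sub_mul hq (y / x),
    show q / (y / x) = q * y⁻¹ * x by field_simp, show q * (y / x) = q * x⁻¹ * y by field_simp]
  field_simp

lemma qp_mul_eq_of_qDifference (hq : ‖q‖ < 1) {F : ℂ → ℂ} {c L : ℂ}
    (hF : ∀ s, ‖s‖ < 1 → (1 - s) * F s = (1 - c * s) * F (q * s))
    (hL : Tendsto F (𝓝 0) (𝓝 L)) {s : ℂ} (hs : ‖s‖ < 1) :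
    qp q s * F s = qp q (c * s) * L := by
  have iterate (K : ℕ) : (∏ k ∈ range K, (1 - q ^ k * s)) * F s
      = (∏ k ∈ range K, (1 - q ^ k * (c * s))) * F (q ^ K * s) := by
    induction K with
    | zero => simp
    | succ K ih =>
      have h := hF (q ^ K * s) ((norm_pow_mul_le hq.le K s).trans_lt hs)
      rw [prod_range_succ, prod_range_succ, pow_succ', mul_assoc q]
      linear_combination (1 - q ^ K * s) * ih + (∏ k ∈ range K, (1 - q ^ k * (c * s))) * h
  have tendsto_qp (x : ℂ) : Tendsto (fun K => ∏ k ∈ range K, (1 - q ^ k * x)) atTop (𝓝 (qp q x)) :=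
    (multipliable_one_sub_pow_mul hq x).hasProd.tendsto_prod_nat
  have tendsto_zero : Tendsto (fun K : ℕ => q ^ K * s) atTop (𝓝 0) := by
    simpa using (tendsto_pow_atTop_nhds_zero_of_norm_lt_one hq).mul_const s
  have lhs := (tendsto_qp s).mul_const (F s)
  simp only [iterate] at lhs
  exact tendsto_nhds_unique lhs ((tendsto_qp (c * s)).mul (hL.comp tendsto_zero))

end QPochhammer

/-! ### A Vandermonde identity -/

section Vandermonde

variable {R : Type*} [CommRing R] {n : ℕ}

lemma adjugate_apply_congr {m : Type*} [Fintype m] [DecidableEq m] {A B : Matrix m m R} {i : m}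
    (h : ∀ k, k ≠ i → A k = B k) (j : m) : A.adjugate j i = B.adjugate j i := by
  have : A.updateRow i (Pi.single j 1) = B.updateRow i (Pi.single j 1) := by
    ext k l
    obtain rfl | hk := eq_or_ne k i
    · simp
    · simp [updateRow_ne hk, h k hk]
  rw [adjugate_apply, adjugate_apply, this]

lemma adjugate_vandermonde_mulVec_eval (v : Fin n → R) {P : R[X]} (hP : P.natDegree < n) :
    (vandermonde v).adjugate *ᵥ (fun i => P.eval (v i))
      = (vandermonde v).det • fun j : Fin n => P.coeff j := by
  have eval_eq : (fun i => P.eval (v i)) = vandermonde v *ᵥ fun j : Fin n => P.coeff j := by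
    ext i
    rw [eval_eq_sum_range' hP, ← Fin.sum_univ_eq_sum_range fun k => P.coeff k * v i ^ k]
    simp [mulVec, dotProduct, vandermonde_apply, mul_comm]
  rw [eval_eq, mulVec_mulVec, adjugate_mul, smul_mulVec, one_mulVec]

variable [NeZero n]

/-- Subtracting a multiple of `∏_j (X - v_j)`, which vanishes at every node, lowers the degree
below `n`. -/
lemma sum_eval_mul_adjugate_vandermonde (v : Fin n → R) {P : R[X]} (hP : P.natDegree ≤ n) :
    ∑ i, P.eval (v i) * (vandermonde v).adjugate 0 i
      = (P.coeff 0 - P.coeff n * ∏ j, -v j) * (vandermonde v).det := by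
  nontriviality R
  set N : R[X] := Lagrange.nodal univ v
  have natDegree_N : N.natDegree = n := by simp [N, Lagrange.natDegree_nodal]
  have coeff_N : N.coeff n = 1 := by
    simpa [natDegree_N] using (Lagrange.nodal_monic (s := univ) (v := v)).coeff_natDegree
  have coeff_zero_N : N.coeff 0 = ∏ j, -v j := by
    simp [N, coeff_zero_eq_eval_zero, Lagrange.eval_nodal]
  set Q : R[X] := P - C (P.coeff n) * N
  have natDegree_Q : Q.natDegree < n := by
    have hle : Q.natDegree ≤ n :=
      (natDegree_sub_le _ _).trans (max_le hP ((natDegree_C_mul_le _ _).trans natDegree_N.le))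
    have hpred := natDegree_le_pred hle (by simp [Q, coeff_N])
    have := NeZero.pos n
    omega
  have eval_Q (i : Fin n) : Q.eval (v i) = P.eval (v i) := by
    simp [Q, N, Lagrange.eval_nodal_at_node]
  have h := congrFun (adjugate_vandermonde_mulVec_eval v natDegree_Q) 0
  simp only [mulVec, dotProduct, eval_Q, Pi.smul_apply, smul_eq_mul, Fin.val_zero] at h
  simpa [Q, coeff_zero_N, mul_comm] using h

lemma sum_prod_one_sub_mul_adjugate_vandermonde (β v : Fin n → R) :
    ∑ i, (∏ j, (1 - β j * v i)) * (vandermonde v).adjugate 0 i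
      = (1 - (∏ j, β j) * ∏ j, v j) * (vandermonde v).det := by
  set P : R[X] := ∏ j, (1 - C (β j) * X)
  have natDegree_factor (j : Fin n) : (1 - C (β j) * X : R[X]).natDegree ≤ 1 := by compute_degree
  have natDegree_P : P.natDegree ≤ n :=
    (natDegree_prod_le _ _).trans ((sum_le_sum fun j _ => natDegree_factor j).trans (by simp))
  have coeff_P : P.coeff n = ∏ j, -β j := by
    simpa [coeff_one] using coeff_prod_of_natDegree_le (s := univ)
      (fun j => (1 - C (β j) * X : R[X])) 1 fun j _ => natDegree_factor j
  have coeff_zero_P : P.coeff 0 = 1 := by simp [P, coeff_zero_prod]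
  have h := sum_eval_mul_adjugate_vandermonde v natDegree_P
  rw [coeff_P, coeff_zero_P, ← prod_mul_distrib] at h
  simpa only [P, eval_prod, eval_sub, eval_one, eval_mul, eval_C, eval_X, neg_mul_neg,
    prod_mul_distrib] using h

/-- Negating the nodes orients the Vandermonde differences as `w_i - w_j` for `i < j`. -/
lemma sum_prod_one_sub_mul_adjugate_vandermonde_neg (β w : Fin n → R) :
    ∑ i, (∏ j, (1 - β j * w i)) * (vandermonde (-w)).adjugate 0 i
      = (1 - (∏ j, β j) * ∏ j, w j) * ∏ i, ∏ j ∈ Ioi i, (w i - w j) := by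
  have h := sum_prod_one_sub_mul_adjugate_vandermonde (-β) (-w)
  rw [det_vandermonde, ← prod_mul_distrib] at h
  simpa only [Pi.neg_apply, neg_mul_neg, prod_mul_distrib, neg_sub_neg] using h

end Vandermonde

/-! ### Power series in the total degree -/

section TotalDegree

variable {ι : Type*}

lemma tsum_add_single [DecidableEq ι] {M : Type*} [AddCommMonoid M] [TopologicalSpace M]
    {f : (ι → ℕ) → M} (i : ι) (hf : ∀ ν : ι → ℕ, ν i = 0 → f ν = 0) :
    ∑' ν : ι → ℕ, f (ν + Pi.single i 1) = ∑' ν, f ν := by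
  refine (add_left_injective (Pi.single i 1 : ι → ℕ)).tsum_eq fun ν hν => ⟨ν - Pi.single i 1, ?_⟩
  have hi : ν i ≠ 0 := fun h => hν (hf ν h)
  ext j
  obtain rfl | hj := eq_or_ne j i
  · simpa using Nat.sub_add_cancel (Nat.pos_of_ne_zero hi)
  · simp [hj]

variable [Fintype ι]

lemma summable_pow_sum {r : ℝ} (h0 : 0 ≤ r) (h1 : r < 1) :
    Summable fun ν : ι → ℕ => r ^ ∑ i, ν i := by
  refine Fintype.induction_empty_option
    (P := fun α _ => Summable fun ν : α → ℕ => r ^ ∑ i, ν i) ?_ .of_finite ?_ ι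
  · intro α β _ e ih
    let _ : Fintype α := .ofEquiv β e.symm
    rw [← (e.arrowCongr (Equiv.refl ℕ)).summable_iff]
    refine ih.congr fun ν => ?_
    simp [Equiv.arrowCongr, e.symm.sum_comp ν]
  · intro α _ ih
    rw [← (Equiv.piOptionEquivProd (β := fun _ : Option α => ℕ)).symm.summable_iff]
    refine ((summable_geometric_of_lt_one h0 h1).mul_of_nonneg ih
      (fun _ => pow_nonneg h0 _) (fun _ => pow_nonneg h0 _)).congr fun p => ?_
    simp [Equiv.piOptionEquivProd, Fintype.sum_option, pow_add]

variable {𝕜 : Type*} [NormedField 𝕜] [CompleteSpace 𝕜] {g : (ι → ℕ) → 𝕜}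

lemma summable_pow_sum_mul (hg : g =O[⊤] fun _ => (1 : ℝ)) {s : 𝕜} (hs : ‖s‖ < 1) :
    Summable fun ν : ι → ℕ => s ^ (∑ i, ν i) * g ν := by
  obtain ⟨B, hB⟩ := isBigO_top.mp hg
  refine ((summable_pow_sum (norm_nonneg s) hs).mul_right (B * ‖(1 : ℝ)‖)).of_norm_bounded
    fun ν => ?_
  rw [norm_mul, norm_pow]
  gcongr
  exact hB ν

lemma tendsto_tsum_pow_sum_mul_nhds_zero (hg : g =O[⊤] fun _ => (1 : ℝ)) :
    Tendsto (fun s : 𝕜 => ∑' ν : ι → ℕ, s ^ (∑ i, ν i) * g ν) (𝓝 0) (𝓝 (g 0)) := by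
  classical
  obtain ⟨B, hB⟩ := isBigO_top.mp hg
  have tsum_zero_pow : ∑' ν : ι → ℕ, (0 : 𝕜) ^ (∑ i, ν i) * g ν = g 0 := by
    rw [tsum_eq_single 0 fun ν hν => ?_]
    · simp
    · simpa [Finset.sum_eq_zero_iff, funext_iff] using Or.inl (by simpa [funext_iff] using hν)
  rw [← tsum_zero_pow]
  refine tendsto_tsum_of_dominated_convergence
    ((summable_pow_sum (r := 1 / 2) (by norm_num) (by norm_num)).mul_right (B * ‖(1 : ℝ)‖))
    (fun ν => Continuous.tendsto (by fun_prop) 0) ?_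
  filter_upwards [Metric.closedBall_mem_nhds (0 : 𝕜) one_half_pos] with s hs ν
  rw [mem_closedBall_zero_iff] at hs
  rw [norm_mul, norm_pow]
  gcongr
  exact hB ν

end TotalDegree

/-! ### The summand at `y = b` -/

/-- The one-variable weight `∏_j (q b_j⁻¹ x)_∞ / (a_j x)_∞` of the Jackson integral. -/
noncomputable def mgWeight {ι : Type*} [Fintype ι] (q : ℂ) (a b : ι → ℂ) (x : ℂ) : ℂ :=
  ∏ j, qp q (q * (b j)⁻¹ * x) / qp q (a j * x)

/-- The lattice point `w = (b_1 q^{ν_1}, …, b_n q^{ν_n})` at which the integrand is evaluated. -/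
def mgPoint {ι : Type*} (q : ℂ) (b : ι → ℂ) (ν : ι → ℕ) (i : ι) : ℂ := b i * q ^ ν i

/-- The factor `W(ν)` of the summand: the product of the one-variable weights over the coordinates
of a lattice point. -/
noncomputable def mgWeightProd {ι : Type*} [Fintype ι] (q : ℂ) (a b : ι → ℂ) (ν : ι → ℕ) : ℂ :=
  ∏ i, mgWeight q a b (mgPoint q b ν i)

section Summand

variable {ι : Type*}

lemma mgPoint_zero (q : ℂ) (b : ι → ℂ) : mgPoint q b 0 = b := by
  ext i
  simp [mgPoint]

lemma mgPoint_add_single [DecidableEq ι] (q : ℂ) (b : ι → ℂ) (ν : ι → ℕ) (i : ι) :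
    mgPoint q b (ν + Pi.single i 1) = Function.update (mgPoint q b ν) i (q * mgPoint q b ν i) := by
  ext j
  obtain rfl | hj := eq_or_ne j i
  · simp [mgPoint, pow_succ, mul_left_comm, mul_comm]
  · simp [mgPoint, hj]

lemma isBigO_one_comp_mgPoint {q : ℂ} (hq : ‖q‖ ≤ 1) (b : ι → ℂ) {g : (ι → ℂ) → ℂ}
    (hg : Continuous g) : (fun ν => g (mgPoint q b ν)) =O[⊤] fun _ => (1 : ℝ) := by
  obtain ⟨B, hB⟩ := (isCompact_univ_pi fun i => isCompact_closedBall (0 : ℂ) ‖b i‖)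
    |>.exists_bound_of_continuousOn hg.continuousOn
  refine isBigO_top.mpr ⟨B, fun ν => ?_⟩
  rw [norm_one, mul_one]
  refine hB _ fun i _ => mem_closedBall_zero_iff.mpr ?_
  rw [mgPoint, mul_comm]
  exact norm_pow_mul_le hq _ _

variable [Fintype ι]

lemma prod_mgPoint (q : ℂ) (b : ι → ℂ) (ν : ι → ℕ) :
    ∏ i, mgPoint q b ν i = (∏ i, b i) * q ^ ∑ i, ν i := by
  simp only [mgPoint, prod_mul_distrib, prod_pow_eq_pow_sum]

variable {q : ℂ} {a b : ι → ℂ}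

lemma mgWeight_mul_prod_one_sub (hq : ‖q‖ < 1) {x : ℂ} (hx : ∀ j, a j * x ≠ 1) :
    mgWeight q a b (q * x) * ∏ j, (1 - (b j)⁻¹ * (q * x))
      = mgWeight q a b x * ∏ j, (1 - a j * x) := by
  simp only [mgWeight, ← prod_mul_distrib]
  refine prod_congr rfl fun j _ => ?_
  have h := qp_div_qp_mul_one_sub hq (q * (b j)⁻¹ * x) (hx j)
  convert h using 3 <;> ring_nf

lemma tendsto_mgWeight_nhds_zero (hq : ‖q‖ < 1) (a b : ι → ℂ) :
    Tendsto (mgWeight q a b) (𝓝 0) (𝓝 1) := by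
  have tendsto_qp_const_mul (c : ℂ) : Tendsto (fun x => qp q (c * x)) (𝓝 0) (𝓝 1) :=
    (tendsto_qp_nhds_zero hq).comp (Continuous.tendsto' (by fun_prop) _ _ (mul_zero c))
  simpa only [funext fun x => mgWeight.eq_1 q a b x, div_one, prod_const_one,
    Pi.div_apply] using tendsto_finsetProd univ fun j _ =>
      (tendsto_qp_const_mul (q * (b j)⁻¹)).div (tendsto_qp_const_mul (a j)) one_ne_zero

lemma mgWeightProd_add_single_mul [DecidableEq ι] (hq : ‖q‖ < 1)
    (hab : ∀ i j (m : ℕ), a i * b j * q ^ m ≠ 1) (ν : ι → ℕ) (i : ι) :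
    mgWeightProd q a b (ν + Pi.single i 1)
        * ∏ j, (1 - (b j)⁻¹ * mgPoint q b (ν + Pi.single i 1) i)
      = mgWeightProd q a b ν * ∏ j, (1 - a j * mgPoint q b ν i) := by
  have h := mgWeight_mul_prod_one_sub hq (b := b) (x := mgPoint q b ν i) fun j => by
    simpa only [mgPoint, mul_assoc] using hab j i (ν i)
  have off_diag : ∏ k ∈ {i}ᶜ, mgWeight q a b (mgPoint q b (ν + Pi.single i 1) k)
      = ∏ k ∈ {i}ᶜ, mgWeight q a b (mgPoint q b ν k) :=
    prod_congr rfl fun k hk => by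
      rw [mgPoint_add_single, Function.update_of_ne (by simpa using hk)]
  rw [mgWeightProd, mgWeightProd, Fintype.prod_eq_mul_prod_compl i, off_diag,
    Fintype.prod_eq_mul_prod_compl i fun k => mgWeight q a b (mgPoint q b ν k)]
  simp only [mgPoint_add_single, Function.update_self]
  rw [mul_right_comm, h, mul_right_comm]

lemma isBigO_one_mgWeightProd (hq : ‖q‖ < 1) (a b : ι → ℂ) :
    mgWeightProd q a b =O[⊤] fun _ => (1 : ℝ) := by
  have factor (i : ι) :
      (fun ν : ι → ℕ => mgWeight q a b (mgPoint q b ν i)) =O[⊤] fun _ => (1 : ℝ) := by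
    have tendsto_point : Tendsto (fun k : ℕ => b i * q ^ k) atTop (𝓝 0) := by
      simpa using (tendsto_pow_atTop_nhds_zero_of_norm_lt_one hq).const_mul (b i)
    obtain ⟨B, hB⟩ := isBigO_one_nat_atTop_iff.mp
      (((tendsto_mgWeight_nhds_zero hq a b).comp tendsto_point).isBigO_one ℝ)
    exact isBigO_top.mpr ⟨B, fun ν => by simpa [mgPoint] using hB (ν i)⟩
  simpa only [funext fun ν => mgWeightProd.eq_1 q a b ν, prod_const_one] using
    IsBigO.finsetProd (s := univ) fun i _ => factor i

end Summand

/-! ### The q-difference equation -/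

/-- The coefficient `W(ν) Δ(w)` of `s^{|ν|}` in the truncated sum, with `w` the lattice point
of `ν` and `Δ(w) = ∏_{i<j} (w_i - w_j)`. -/
noncomputable def mgCoeff {n : ℕ} (q : ℂ) (a b : Fin n → ℂ) (ν : Fin n → ℕ) : ℂ :=
  mgWeightProd q a b ν * ∏ i, ∏ j ∈ Ioi i, (mgPoint q b ν i - mgPoint q b ν j)

/-- The power series `F(s) = ∑_{ν ∈ ℕⁿ} s^{|ν|} W(ν) Δ(w)`, to which the sum over `ℤⁿ` reduces
at `y = b`. -/
noncomputable def mgSeries {n : ℕ} (q : ℂ) (a b : Fin n → ℂ) (s : ℂ) : ℂ :=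
  ∑' ν : Fin n → ℕ, s ^ (∑ i, ν i) * mgCoeff q a b ν

/-- The coefficient `W(ν) ∏_j (1 - β_j w_i) C_i(w)`, where `C_i(w)` is the cofactor of the `i`-th
entry in the column of ones of the Vandermonde matrix with determinant `Δ(w)`. -/
noncomputable def mgCofactorCoeff {n : ℕ} [NeZero n] (q : ℂ) (a b β : Fin n → ℂ) (i : Fin n)
    (ν : Fin n → ℕ) : ℂ :=
  mgWeightProd q a b ν *
    ((∏ j, (1 - β j * mgPoint q b ν i)) * (vandermonde (-mgPoint q b ν)).adjugate 0 i)

section QDifference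

variable {n : ℕ} {q s : ℂ} {a b : Fin n → ℂ}

lemma isBigO_one_mgCoeff (hq : ‖q‖ < 1) (a b : Fin n → ℂ) :
    mgCoeff q a b =O[⊤] fun _ => (1 : ℝ) := by
  have continuous_prod_sub : Continuous fun w : Fin n → ℂ => ∏ i, ∏ j ∈ Ioi i, (w i - w j) := by
    fun_prop
  simpa only [funext fun ν => mgCoeff.eq_1 q a b ν, one_mul] using
    (isBigO_one_mgWeightProd hq a b).mul (isBigO_one_comp_mgPoint hq.le b continuous_prod_sub)

section Cofactor

variable [NeZero n]

lemma isBigO_one_mgCofactorCoeff (hq : ‖q‖ < 1) (a b β : Fin n → ℂ) (i : Fin n) :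
    mgCofactorCoeff q a b β i =O[⊤] fun _ => (1 : ℝ) := by
  have continuous_adjugate : Continuous fun w : Fin n → ℂ => (vandermonde (-w)).adjugate :=
    (continuous_matrix fun i j => by simp only [vandermonde_apply]; fun_prop).matrix_adjugate
  have continuous_cofactor : Continuous fun w : Fin n → ℂ =>
      (∏ j, (1 - β j * w i)) * (vandermonde (-w)).adjugate 0 i :=
    (by fun_prop : Continuous _).mul (continuous_adjugate.matrix_elem 0 i)
  simpa only [funext fun ν => mgCofactorCoeff.eq_1 q a b β i ν, one_mul] using
    (isBigO_one_mgWeightProd hq a b).mul (isBigO_one_comp_mgPoint hq.le b continuous_cofactor)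

lemma sum_mgCofactorCoeff (q : ℂ) (a b β : Fin n → ℂ) (ν : Fin n → ℕ) :
    ∑ i, mgCofactorCoeff q a b β i ν
      = (1 - (∏ j, β j) * (∏ j, b j) * q ^ ∑ i, ν i) * mgCoeff q a b ν := by
  simp only [mgCofactorCoeff, ← mul_sum]
  rw [sum_prod_one_sub_mul_adjugate_vandermonde_neg, prod_mgPoint, mgCoeff]
  ring

lemma sum_tsum_mgCofactorCoeff (hq : ‖q‖ < 1) (hs : ‖s‖ < 1) (a b β : Fin n → ℂ) :
    ∑ i, ∑' ν : Fin n → ℕ, s ^ (∑ j, ν j) * mgCofactorCoeff q a b β i ν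
      = mgSeries q a b s - (∏ j, β j) * (∏ j, b j) * mgSeries q a b (q * s) := by
  have hqs : ‖q * s‖ < 1 := by simpa using (norm_pow_mul_le hq.le 1 s).trans_lt hs
  have hD := isBigO_one_mgCoeff hq a b
  rw [← Summable.tsum_finsetSum fun i _ =>
    summable_pow_sum_mul (isBigO_one_mgCofactorCoeff hq a b β i) hs]
  simp only [mgSeries, ← mul_sum, sum_mgCofactorCoeff]
  rw [← tsum_mul_left, ← (summable_pow_sum_mul hD hs).tsum_sub
    ((summable_pow_sum_mul hD hqs).mul_left _)]
  exact tsum_congr fun ν => by ring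

lemma mgCofactorCoeff_add_single (hq : ‖q‖ < 1) (hab : ∀ i j (m : ℕ), a i * b j * q ^ m ≠ 1)
    (i : Fin n) (ν : Fin n → ℕ) :
    mgCofactorCoeff q a b b⁻¹ i (ν + Pi.single i 1) = mgCofactorCoeff q a b a i ν := by
  have cofactor_eq : (vandermonde (-mgPoint q b (ν + Pi.single i 1))).adjugate 0 i
      = (vandermonde (-mgPoint q b ν)).adjugate 0 i :=
    adjugate_apply_congr (fun k hk => by
      ext
      simp [vandermonde_apply, mgPoint_add_single, hk]) 0
  simp only [mgCofactorCoeff, cofactor_eq, ← mul_assoc, Pi.inv_apply,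
    mgWeightProd_add_single_mul hq hab]

lemma mgCofactorCoeff_inv_of_eq_zero {i : Fin n} (hbi : b i ≠ 0) {ν : Fin n → ℕ} (hν : ν i = 0) :
    mgCofactorCoeff q a b b⁻¹ i ν = 0 := by
  have : ∏ j, (1 - b⁻¹ j * mgPoint q b ν i) = 0 :=
    prod_eq_zero (mem_univ i) (by simp [mgPoint, hν, hbi])
  rw [mgCofactorCoeff, this, zero_mul, mul_zero]

lemma tsum_mgCofactorCoeff_inv (hq : ‖q‖ < 1) (hb : ∀ i, b i ≠ 0)
    (hab : ∀ i j (m : ℕ), a i * b j * q ^ m ≠ 1) (s : ℂ) (i : Fin n) :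
    ∑' ν : Fin n → ℕ, s ^ (∑ j, ν j) * mgCofactorCoeff q a b b⁻¹ i ν
      = s * ∑' ν : Fin n → ℕ, s ^ (∑ j, ν j) * mgCofactorCoeff q a b a i ν := by
  rw [← tsum_add_single i fun ν hν => by
    rw [mgCofactorCoeff_inv_of_eq_zero (hb i) hν, mul_zero], ← tsum_mul_left]
  refine tsum_congr fun ν => ?_
  have sum_add_single : ∑ j, (ν + Pi.single i 1 : Fin n → ℕ) j = ∑ j, ν j + 1 := by
    simp [sum_add_distrib]
  rw [mgCofactorCoeff_add_single hq hab, sum_add_single, pow_succ', mul_assoc]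

end Cofactor

lemma one_sub_mul_mgSeries (hq : ‖q‖ < 1) (hb : ∀ i, b i ≠ 0)
    (hab : ∀ i j (m : ℕ), a i * b j * q ^ m ≠ 1) (hs : ‖s‖ < 1) :
    (1 - s) * mgSeries q a b s
      = (1 - (∏ i, a i) * (∏ i, b i) * s) * mgSeries q a b (q * s) := by
  obtain rfl | hn := eq_or_ne n 0
  · simp [mgSeries]
  have : NeZero n := ⟨hn⟩
  have sum_inv := sum_tsum_mgCofactorCoeff hq hs a b b⁻¹
  simp only [tsum_mgCofactorCoeff_inv hq hb hab, ← mul_sum,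
    sum_tsum_mgCofactorCoeff hq hs a b a] at sum_inv
  have prod_inv : (∏ j, b⁻¹ j) * ∏ j, b j = 1 := by
    rw [← prod_mul_distrib]
    exact prod_eq_one fun j _ => inv_mul_cancel₀ (hb j)
  rw [prod_inv] at sum_inv
  linear_combination -sum_inv

lemma qp_mul_mgSeries (hq : ‖q‖ < 1) (hb : ∀ i, b i ≠ 0)
    (hab : ∀ i j (m : ℕ), a i * b j * q ^ m ≠ 1) (hs : ‖s‖ < 1) :
    qp q s * mgSeries q a b s = qp q ((∏ i, a i) * (∏ i, b i) * s) * mgCoeff q a b 0 :=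
  qp_mul_eq_of_qDifference hq (fun _ => one_sub_mul_mgSeries hq hb hab)
    (tendsto_tsum_pow_sum_mul_nhds_zero (isBigO_one_mgCoeff hq a b)) hs

end QDifference

/-! ### Back to the Jackson integral -/

section Jackson

variable {n : ℕ} {q : ℂ} {b : Fin n → ℂ}

/-- For `ν i < 0` a denominator `(a_j b_i q^{ν_i})_∞` may vanish as well; the term is then zero by
the convention `x / 0 = 0`, in agreement with the paper. -/
lemma mgDualTerm_eq_zero_of_neg (hq0 : q ≠ 0) (s : ℂ) (a : Fin n → ℂ) {ν : Fin n → ℤ} {i : Fin n}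
    (hb : b i ≠ 0) (hν : ν i < 0) : mgDualTerm q s a b b ν = 0 := by
  have numerator_eq_zero : qp q (q * (b i)⁻¹ * (b i * q ^ ν i)) = 0 := by
    rw [mul_assoc, inv_mul_cancel_left₀ hb, ← zpow_one_add₀ hq0]
    exact qp_zpow_eq_zero hq0 (by omega)
  have quotients_eq_zero :
      ∏ i, ∏ j, qp q (q * (b j)⁻¹ * (b i * q ^ ν i)) / qp q (a j * (b i * q ^ ν i)) = 0 :=
    prod_eq_zero (mem_univ i) (prod_eq_zero (mem_univ i) (by rw [numerator_eq_zero, zero_div]))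
  rw [mgDualTerm, quotients_eq_zero, mul_zero, zero_mul]

lemma mgDualTerm_natCast (q s : ℂ) (a b : Fin n → ℂ) (ν : Fin n → ℕ) :
    mgDualTerm q s a b b (fun i => (ν i : ℤ)) = s ^ (∑ i, ν i) * mgCoeff q a b ν := by
  simp only [mgDualTerm, mgCoeff, mgWeightProd, mgWeight, mgPoint, zpow_natCast, ← Nat.cast_sum,
    mul_assoc]

lemma mgDualSum_eq_mul_mgSeries (hq0 : q ≠ 0) (s : ℂ) (a : Fin n → ℂ) (hb : ∀ i, b i ≠ 0) :
    mgDualSum q s a b b = (1 - q) ^ n * mgSeries q a b s := by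
  have cast_injective : Function.Injective fun (ν : Fin n → ℕ) (i : Fin n) => (ν i : ℤ) :=
    Nat.cast_injective.comp_left
  rw [mgDualSum, mgSeries, ← cast_injective.tsum_eq fun ν hν => ?_]
  · simp only [mgDualTerm_natCast]
  · have nonneg (i : Fin n) : 0 ≤ ν i := by
      by_contra! hi
      exact hν (mgDualTerm_eq_zero_of_neg hq0 s a (hb i) hi)
    exact ⟨fun i => (ν i).toNat, by simp [nonneg]⟩

lemma prod_qp_mul_prod_sub (hq : ‖q‖ < 1) (hb : ∀ i, b i ≠ 0) :
    (∏ i, ∏ j, qp q (q * (b j)⁻¹ * b i)) * ∏ i, ∏ j ∈ Ioi i, (b i - b j)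
      = qp q q ^ n * ∏ i, ∏ j ∈ Ioi i, b i * th q (b j / b i) := by
  have split_diagonal : ∏ i, ∏ j, qp q (q * (b j)⁻¹ * b i) = qp q q ^ n *
      ∏ i, ∏ j ∈ Ioi i, qp q (q * (b i)⁻¹ * b j) * qp q (q * (b j)⁻¹ * b i) := by
    rw [prod_prod_Ioi_mul_eq_prod_prod_off_diag fun j i => qp q (q * (b i)⁻¹ * b j),
      Finset.prod_comm]
    simp only [fun i => Fintype.prod_eq_mul_prod_compl i fun j => qp q (q * (b i)⁻¹ * b j),
      prod_mul_distrib, inv_mul_cancel_right₀ (hb _), prod_const, card_univ, Fintype.card_fin]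
  simp only [split_diagonal, mul_th_div hq (hb _) (hb _), prod_mul_distrib]
  ring

lemma mgCoeff_zero (hq : ‖q‖ < 1) (a : Fin n → ℂ) (hb : ∀ i, b i ≠ 0) :
    mgCoeff q a b 0 = qp q q ^ n * (∏ i, ∏ j ∈ Ioi i, b i * th q (b j / b i)) /
      ∏ i, ∏ j, qp q (a i * b j) := by
  rw [← prod_qp_mul_prod_sub hq hb, Finset.prod_comm (f := fun i j => qp q (a i * b j))]
  simp only [mgCoeff, mgWeightProd, mgWeight, mgPoint_zero, prod_div_distrib]
  ring

end Jackson

theorem milne_gustafson_dual_truncated_evaluation_general {q : ℂ} (hq0 : q ≠ 0) (hq1 : ‖q‖ < 1)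
    {n : ℕ} {a b : Fin n → ℂ} (hb : ∀ i, b i ≠ 0) {s : ℂ} (hs : ‖s‖ < 1)
    (hab : ∀ i j, ∀ m : ℕ, a i * b j ≠ (q ^ m)⁻¹) :
    mgDualSum q s a b b =
      (1 - q) ^ n * qp q q ^ n * qp q (s * (∏ i, a i) * ∏ i, b i) /
          (qp q s * ∏ i, ∏ j, qp q (a i * b j)) *
        ∏ i, ∏ j ∈ Ioi i, b i * th q (b j / b i) := by
  have hab' (i j) (m : ℕ) : a i * b j * q ^ m ≠ 1 := fun h =>
    hab i j m (eq_inv_of_mul_eq_one_left h)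
  have hF := qp_mul_mgSeries hq1 hb hab' hs
  rw [mgCoeff_zero hq1 a hb, mul_comm, ← eq_div_iff (qp_ne_zero_of_norm_lt_one hq1 hs)] at hF
  rw [mgDualSum_eq_mul_mgSeries hq0 s a hb, hF, mul_assoc s, mul_comm s]
  ring

/-- Evaluation of the truncated dual Milne–Gustafson sum `Ī(s;b)`. -/
theorem milne_gustafson_dual_truncated_evaluation
    (q : ℝ) (hq0 : 0 < q) (hq1 : q < 1) (n : ℕ) (hn : 1 ≤ n)
    (a b : Fin n → ℂ) (ha : ∀ i, a i ≠ 0) (hb : ∀ i, b i ≠ 0)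
    (s : ℂ) (hs0 : s ≠ 0) (hupp : ‖s‖ < 1)
    (hab : ∀ i j, ∀ m : ℕ, a i * b j ≠ ((q : ℂ) ^ m)⁻¹) :
    mgDualSum (q : ℂ) s a b b =
      (1 - (q : ℂ)) ^ n * qp (q : ℂ) (q : ℂ) ^ n *
          qp (q : ℂ) (s * (∏ i, a i) * ∏ i, b i) /
          (qp (q : ℂ) s * ∏ i, ∏ j, qp (q : ℂ) (a i * b j)) *
        ∏ i, ∏ j ∈ Finset.Ioi i, b i * th (q : ℂ) (b j / b i) := by
  exact milne_gustafson_dual_truncated_evaluation_general (by exact_mod_cast hq0.ne')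
    (by simpa [abs_of_pos hq0] using hq1) hb hupp hab
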